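/- Let 2 < a₀ ≤ a₁. There exists a constant K(a₀,a₁) > 0 such that for all β, β′ ∈ [a₀, a₁] with β ≠ β′, |E(β) − E(β′)| ≤ K(a₀,a₁)·|β − β′|·(1 + |log|β − β′||). -/

import Mathlib

/-- The orbit of `1` under the β-map `T_β(x) = βx mod 1`: `t₀ = 1`,
`t_{n+1} = β t_n − ⌊β t_n⌋`. -/
noncomputable def betaOrbit (β : ℝ) : ℕ → ℝ
  | 0 => 1
  | n + 1 => Int.fract (β * betaOrbit β n)

/-- `E(β) = (∑ t_n(β)²/(2βⁿ)) / (∑ t_n(β)/βⁿ)`, the expectation of the unique acim of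
the β-map. -/
noncomputable def Ebeta (β : ℝ) : ℝ :=
  (∑' n : ℕ, (betaOrbit β n) ^ 2 / (2 * β ^ n)) / (∑' n : ℕ, betaOrbit β n / β ^ n)

namespace BetaLog

open Real

lemma nml_two (u v : ℝ) (hu : 0 ≤ u) (hv : 0 ≤ v) :
    negMulLog u + negMulLog v ≤ negMulLog (u + v) + (u + v) * log 2 := by
  have h := concaveOn_negMulLog.2 (Set.mem_Ici.2 hu) (Set.mem_Ici.2 hv)
    (by norm_num : (0:ℝ) ≤ 1/2) (by norm_num : (0:ℝ) ≤ 1/2) (by norm_num)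
  simp only [smul_eq_mul] at h
  have e : (1/2:ℝ) * u + 1/2 * v = (1/2) * (u + v) := by ring
  have e2 : negMulLog (1/2:ℝ) = log 2 / 2 := by
    rw [negMulLog, one_div, log_inv]; ring
  rw [e, negMulLog_mul, e2] at h
  linarith

lemma nml_scale (β d : ℝ) (hβ : 0 < β) :
    negMulLog (β * d) / β = negMulLog d - d * log β := by
  rw [negMulLog_mul]
  simp only [negMulLog]
  field_simp
  ring

lemma q_lip (E s t : ℝ) (hE0 : 0 ≤ E) (hE1 : E ≤ 1) (hs : s ∈ Set.Icc (0:ℝ) 1)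
    (ht : t ∈ Set.Icc (0:ℝ) 1) (hst : s ≤ t) :
    |(t^2/2 - E*t) - (s^2/2 - E*s)| ≤ t - s := by
  have : (t^2/2 - E*t) - (s^2/2 - E*s) = (t - s) * ((t+s)/2 - E) := by ring
  rw [this, abs_mul, abs_of_nonneg (by linarith : 0 ≤ t - s)]
  have h : |(t+s)/2 - E| ≤ 1 := by
    rw [abs_le]; constructor <;> linarith [hs.1, hs.2, ht.1, ht.2]
  nlinarith

lemma fract_mem (x : ℝ) : Int.fract x ∈ Set.Icc (0:ℝ) 1 :=
  ⟨Int.fract_nonneg x, (Int.fract_lt_one x).le⟩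

lemma modulus_aux (a₀ a₁ β E : ℝ) (h₀ : 2 < a₀) (hβ₀ : a₀ ≤ β) (hβ₁ : β ≤ a₁)
    (hE0 : 0 ≤ E) (hE1 : E ≤ 1) (Ψ : ℝ → ℝ)
    (hfe : ∀ t ∈ Set.Icc (0:ℝ) 1, Ψ t = (t^2/2 - E*t) + Ψ (Int.fract (β*t)) / β)
    (hz : Ψ 0 = 0) (ho : Ψ 1 = 0) (hM : ∀ t ∈ Set.Icc (0:ℝ) 1, |Ψ t| ≤ 2) (k : ℕ) :
    ∀ x y : ℝ, x ≤ y → y - x ≤ 1 → |Ψ (Int.fract y) - Ψ (Int.fract x)| ≤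
      4 * a₁ * (y - x) + 1 / log (a₀/2) * negMulLog (y - x) + 4 * (2/a₀)^k := by
  have hl : 0 < log (a₀/2) := log_pos (by linarith)
  set B := 1 / log (a₀/2) with hB
  have hBpos : 0 < B := by positivity
  have hβpos : 0 < β := by linarith
  have hBl : 1 ≤ B * (log β - log 2) := by
    have : log (a₀/2) ≤ log β - log 2 := by
      rw [log_div (by linarith) (by norm_num)]
      have := log_le_log (by linarith) hβ₀
      linarith
    calc 1 = B * log (a₀/2) := by rw [hB]; field_simp
      _ ≤ _ := by gcongr
  have hl2 : 0 < log 2 := log_pos (by norm_num)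
  have htriv : ∀ x y : ℝ, |Ψ (Int.fract y) - Ψ (Int.fract x)| ≤ 4 := by
    intro x y
    have h1 := abs_le.1 (hM _ (fract_mem x))
    have h2 := abs_le.1 (hM _ (fract_mem y))
    rw [abs_le]; constructor <;> linarith
  have hnml : ∀ d : ℝ, 0 ≤ d → d ≤ 1 → 0 ≤ negMulLog d := fun d h1 h2 => negMulLog_nonneg h1 h2
  induction k with
  | zero =>
    intro x y hxy hd
    have := htriv x y
    have h2 := mul_nonneg hBpos.le (hnml (y-x) (by linarith) hd)
    have h3 : 0 ≤ 4 * a₁ * (y - x) := mul_nonneg (by linarith) (by linarith)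
    simp only [pow_zero]; linarith
  | succ k ih =>
    set r := 4 * (2/a₀)^k with hr
    have hrpos : 0 ≤ r := by positivity
    have hr' : 2 * (r / β) ≤ 4 * (2/a₀)^(k+1) := by
      have : 4 * (2/a₀)^(k+1) = 2 * (r / a₀) := by rw [hr, pow_succ]; ring
      rw [this]; gcongr
    have cell : ∀ s t : ℝ, s ∈ Set.Icc (0:ℝ) 1 → t ∈ Set.Icc (0:ℝ) 1 → s ≤ t → β * (t - s) ≤ 1 →
        |Ψ t - Ψ s| ≤ (t - s) + 4 * a₁ * (t - s) + B * (negMulLog (t - s) - (t - s) * log β)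
          + r / β := by
      intro s t hs ht hst hd
      have h1 := ih (β*s) (β*t) (by gcongr) (by linarith)
      have h2 := q_lip E s t hE0 hE1 hs ht hst
      have e : β*t - β*s = β*(t-s) := by ring
      rw [e] at h1
      have h3 : |Ψ (Int.fract (β*t)) / β - Ψ (Int.fract (β*s)) / β| ≤
          4 * a₁ * (t - s) + B * (negMulLog (t - s) - (t - s) * log β) + r / β := by
        rw [← sub_div, abs_div, abs_of_pos hβpos, ← nml_scale β _ hβpos]
        calc _ ≤ (4 * a₁ * (β*(t - s)) + B * negMulLog (β*(t - s)) + r) / β := by gcongr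
          _ = _ := by field_simp
      rw [hfe t ht, hfe s hs]
      have h4 := abs_add_le ((t^2/2 - E*t) - (s^2/2 - E*s))
        (Ψ (Int.fract (β*t)) / β - Ψ (Int.fract (β*s)) / β)
      have e2 : ((t^2/2 - E*t) - (s^2/2 - E*s)) +
        (Ψ (Int.fract (β*t)) / β - Ψ (Int.fract (β*s)) / β) =
        t^2/2 - E*t + Ψ (Int.fract (β*t)) / β - (s^2/2 - E*s + Ψ (Int.fract (β*s)) / β) := by ring
      rw [e2] at h4
      linarith
    intro x y hxy hd
    have hd0 : 0 ≤ y - x := by linarith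
    by_cases hc : 1 ≤ β * (y - x)
    · have := htriv x y
      have h2 := mul_nonneg hBpos.le (hnml (y-x) hd0 hd)
      have h3 : 4 ≤ 4 * a₁ * (y - x) := by nlinarith
      have h4 : 0 ≤ 4 * (2/a₀)^(k+1) := by positivity
      linarith
    push Not at hc
    have hlt : y - x < 1 := by nlinarith
    have hf1 : ⌊x⌋ ≤ ⌊y⌋ := Int.floor_mono hxy
    have hf2 : ⌊y⌋ ≤ ⌊x⌋ + 1 := by
      have : y < x + 1 := by linarith
      have := Int.floor_mono this.le
      rwa [Int.floor_add_one] at this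
    have hrb : 0 ≤ r / β := by positivity
    have hfx := Int.fract_add_floor x
    have hfy := Int.fract_add_floor y
    have hdl : (y - x) ≤ B * ((y - x) * (log β - log 2)) := by nlinarith
    rcases eq_or_lt_of_le hf1 with he | hne
    · have ed : Int.fract y - Int.fract x = y - x := by
        simp only [Int.fract, he]; ring
      have := cell (Int.fract x) (Int.fract y) (fract_mem x) (fract_mem y) (by linarith)
        (by rw [ed]; exact hc.le)
      rw [ed] at this
      have : 0 ≤ B * ((y - x) * log 2) := by positivity
      nlinarith
    · have he : ⌊y⌋ = ⌊x⌋ + 1 := by omega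
      have he' : (⌊y⌋ : ℝ) = ⌊x⌋ + 1 := by rw [he]; push_cast; ring
      have hx := fract_mem x
      have hy := fract_mem y
      set u := 1 - Int.fract x with hu
      set v := Int.fract y with hv
      have huv : u + v = y - x := by linarith
      have hu0 : 0 ≤ u := by linarith [hx.2]
      have hv0 : 0 ≤ v := hy.1
      have c1 := cell (Int.fract x) 1 hx (by norm_num) hx.2 (by nlinarith)
      have c2 := cell 0 v (by norm_num) hy hv0 (by rw [sub_zero]; nlinarith)
      rw [sub_zero, hz, sub_zero] at c2
      rw [ho, zero_sub, abs_neg, ← hu] at c1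
      have c3 := abs_sub (Ψ v) (Ψ (Int.fract x))
      have c4 := mul_le_mul_of_nonneg_left (nml_two u v hu0 hv0) hBpos.le
      rw [huv] at c4
      have e5 : 4 * a₁ * u + 4 * a₁ * v = 4 * a₁ * (y - x) := by rw [← huv]; ring
      have e6 : B * (u * log β) + B * (v * log β) = B * ((y - x) * log β) := by rw [← huv]; ring
      linarith

lemma modulus (a₀ a₁ β E : ℝ) (h₀ : 2 < a₀) (hβ₀ : a₀ ≤ β) (hβ₁ : β ≤ a₁)
    (hE0 : 0 ≤ E) (hE1 : E ≤ 1) (Ψ : ℝ → ℝ)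
    (hfe : ∀ t ∈ Set.Icc (0:ℝ) 1, Ψ t = (t^2/2 - E*t) + Ψ (Int.fract (β*t)) / β)
    (hz : Ψ 0 = 0) (ho : Ψ 1 = 0) (hM : ∀ t ∈ Set.Icc (0:ℝ) 1, |Ψ t| ≤ 2) (x y : ℝ)
    (hd : |y - x| ≤ 1) : |Ψ (Int.fract y) - Ψ (Int.fract x)| ≤
      4 * a₁ * |y - x| + 1 / log (a₀/2) * negMulLog |y - x| := by
  wlog hxy : x ≤ y generalizing x y
  · rw [abs_sub_comm (Ψ _), abs_sub_comm y]
    exact this y x (by rwa [abs_sub_comm]) (by linarith)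
  rw [abs_of_nonneg (by linarith : 0 ≤ y - x)] at *
  have ht : Filter.Tendsto (fun k : ℕ => 4 * a₁ * (y - x) + 1 / log (a₀/2) * negMulLog (y - x)
      + 4 * (2/a₀)^k) Filter.atTop
      (nhds (4 * a₁ * (y - x) + 1 / log (a₀/2) * negMulLog (y - x) + 4 * 0)) := by
    refine tendsto_const_nhds.add (Filter.Tendsto.const_mul _ ?_)
    exact tendsto_pow_atTop_nhds_zero_of_lt_one (by positivity)
      (by rw [div_lt_one (by linarith)]; exact h₀)
  rw [mul_zero, add_zero] at ht
  exact ge_of_tendsto' ht fun k =>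
    modulus_aux a₀ a₁ β E h₀ hβ₀ hβ₁ hE0 hE1 Ψ hfe hz ho hM k x y hxy hd

/-- general orbit -/
noncomputable def orb (β t : ℝ) (n : ℕ) : ℝ := (fun x => Int.fract (β * x))^[n] t

lemma orb_succ (β t : ℝ) (n : ℕ) : orb β t (n+1) = orb β (Int.fract (β * t)) n := by
  simp [orb, Function.iterate_succ_apply]

lemma orb_succ' (β t : ℝ) (n : ℕ) : orb β t (n+1) = Int.fract (β * orb β t n) := by
  simp [orb, Function.iterate_succ_apply']

lemma orb_one (β : ℝ) (n : ℕ) : orb β 1 n = betaOrbit β n := by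
  induction n with
  | zero => simp [orb, betaOrbit]
  | succ n ih => rw [orb_succ', ih, betaOrbit]

lemma orb_mem (β t : ℝ) (ht : t ∈ Set.Icc (0:ℝ) 1) (n : ℕ) : orb β t n ∈ Set.Icc (0:ℝ) 1 := by
  cases n with
  | zero => simpa [orb] using ht
  | succ n => rw [orb_succ']; exact fract_mem _

lemma geo (β : ℝ) (hβ : 2 < β) : Summable (fun n : ℕ => (1:ℝ) / β^n) ∧
    ∑' n : ℕ, (1:ℝ) / β^n ≤ 2 := by
  have h1 : β⁻¹ < 1/2 := by rw [one_div]; exact inv_strictAnti₀ (by norm_num) hβ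
  have h0 : 0 ≤ β⁻¹ := by positivity
  have e : (fun n : ℕ => (1:ℝ) / β^n) = fun n => (β⁻¹)^n := by
    ext n; simp
  rw [e]
  refine ⟨summable_geometric_of_lt_one h0 (by linarith), ?_⟩
  rw [tsum_geometric_of_lt_one h0 (by linarith)]
  rw [inv_le_comm₀ (by linarith) (by norm_num)]
  linarith

lemma bd (β c : ℝ) (hβ : 2 < β) (f : ℕ → ℝ) (hf : ∀ n, |f n| ≤ c) :
    Summable (fun n => f n / β^n) ∧ |∑' n, f n / β^n| ≤ 2 * c := by
  obtain ⟨hs, ht⟩ := geo β hβ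
  have hc : 0 ≤ c := (abs_nonneg _).trans (hf 0)
  have hle : ∀ n, ‖f n / β^n‖ ≤ c * (1 / β^n) := by
    intro n
    have : 0 < β^n := by positivity
    rw [Real.norm_eq_abs, abs_div, abs_of_pos this, mul_one_div]
    gcongr; exact hf n
  have hs' := hs.mul_left c
  refine ⟨Summable.of_norm_bounded hs' hle, ?_⟩
  have := tsum_of_norm_bounded hs'.hasSum hle
  rw [tsum_mul_left] at this
  rw [Real.norm_eq_abs] at this
  nlinarith

lemma denom (β : ℝ) (hβ : 2 < β) : 1 ≤ ∑' n : ℕ, betaOrbit β n / β ^ n := by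
  have hm : ∀ n, betaOrbit β n ∈ Set.Icc (0:ℝ) 1 := fun n => by
    rw [← orb_one]; exact orb_mem _ _ (by norm_num) n
  have h := (bd β 1 hβ (betaOrbit β) (fun n => by
    rw [abs_of_nonneg (hm n).1]; exact (hm n).2)).1
  have := h.le_tsum 0 (fun n _ => div_nonneg (hm n).1 (by positivity))
  simpa [betaOrbit] using this

lemma num_eq (β : ℝ) : (∑' n : ℕ, (betaOrbit β n) ^ 2 / (2 * β ^ n)) =
    ∑' n : ℕ, ((betaOrbit β n) ^ 2 / 2) / β ^ n := by
  congr 1; ext n; rw [div_div]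

/-- The difference of numerator and multiple of the denominator. -/
lemma num_sub (β E : ℝ) (hβ : 2 < β) :
    ∑' n : ℕ, (orb β 1 n ^ 2 / 2 - E * orb β 1 n) / β ^ n =
      (Ebeta β - E) * ∑' n : ℕ, betaOrbit β n / β ^ n := by
  have hm : ∀ n, betaOrbit β n ∈ Set.Icc (0:ℝ) 1 := fun n => by
    rw [← orb_one]; exact orb_mem _ _ (by norm_num) n
  have s1 := (bd β 1 hβ (betaOrbit β) (fun n => by
    rw [abs_of_nonneg (hm n).1]; exact (hm n).2)).1
  have s2 := (bd β 1 hβ (fun n => betaOrbit β n ^ 2 / 2) (fun n => by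
    rw [abs_of_nonneg (by positivity)]; nlinarith [(hm n).1, (hm n).2])).1
  have hd := denom β hβ
  rw [Ebeta, sub_mul, div_mul_cancel₀ _ (by linarith), num_eq, ← tsum_mul_left,
    ← s2.tsum_sub (s1.mul_left E)]
  congr 1; ext n; rw [orb_one]; ring

lemma E_mem (β : ℝ) (hβ : 2 < β) : Ebeta β ∈ Set.Icc (0:ℝ) 1 := by
  have hm : ∀ n, betaOrbit β n ∈ Set.Icc (0:ℝ) 1 := fun n => by
    rw [← orb_one]; exact orb_mem _ _ (by norm_num) n
  have s1 := (bd β 1 hβ (betaOrbit β) (fun n => by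
    rw [abs_of_nonneg (hm n).1]; exact (hm n).2)).1
  have s2 := (bd β 1 hβ (fun n => betaOrbit β n ^ 2 / 2) (fun n => by
    rw [abs_of_nonneg (by positivity)]; nlinarith [(hm n).1, (hm n).2])).1
  have hd := denom β hβ
  rw [Ebeta, num_eq]
  constructor
  · refine div_nonneg (tsum_nonneg fun n => ?_) (by linarith)
    positivity
  · rw [div_le_one (by linarith)]
    refine s2.tsum_le_tsum (fun n => ?_) s1
    have : betaOrbit β n ^ 2 / 2 ≤ betaOrbit β n := by nlinarith [(hm n).1, (hm n).2]
    gcongr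

/-- The Poisson-type solution. -/
noncomputable def Psi (β t : ℝ) : ℝ :=
  ∑' n : ℕ, (orb β t n ^ 2 / 2 - Ebeta β * orb β t n) / β ^ n

lemma q_bd (E t : ℝ) (hE : E ∈ Set.Icc (0:ℝ) 1) (ht : t ∈ Set.Icc (0:ℝ) 1) :
    |t^2/2 - E*t| ≤ 1 := by
  obtain ⟨a, b⟩ := hE
  obtain ⟨c, d⟩ := ht
  rw [abs_le]; constructor <;> nlinarith [mul_nonneg a c]

lemma Psi_bd (β t : ℝ) (hβ : 2 < β) (ht : t ∈ Set.Icc (0:ℝ) 1) : |Psi β t| ≤ 2 := by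
  have := (bd β 1 hβ _ (fun n => q_bd _ _ (E_mem β hβ) (orb_mem β t ht n))).2
  simpa [Psi] using this

lemma Psi_fe (β t : ℝ) (hβ : 2 < β) (ht : t ∈ Set.Icc (0:ℝ) 1) :
    Psi β t = (t^2/2 - Ebeta β*t) + Psi β (Int.fract (β*t)) / β := by
  have s := (bd β 1 hβ _ (fun n => q_bd _ _ (E_mem β hβ) (orb_mem β t ht n))).1
  rw [Psi, s.tsum_eq_zero_add, Psi, ← tsum_div_const]
  congr 1
  · simp [orb]
  · congr 1; ext n; rw [orb_succ, pow_succ β n, div_div]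

lemma Psi_one (β : ℝ) (hβ : 2 < β) : Psi β 1 = 0 := by
  rw [Psi, num_sub β _ hβ, sub_self, zero_mul]

lemma Psi_zero (β : ℝ) (hβ : 2 < β) : Psi β 0 = 0 := by
  have h := Psi_fe β 0 hβ (by norm_num)
  simp only [mul_zero, Int.fract_zero] at h
  have h2 : Psi β 0 * (1 - 1/β) = 0 := by
    have : Psi β 0 * (1 - 1/β) = Psi β 0 - Psi β 0 / β := by ring
    rw [this]; linarith
  have : 1/β < 1 := by rw [div_lt_one (by linarith)]; linarith
  rcases mul_eq_zero.1 h2 with h | h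
  · exact h
  · linarith

lemma final (a₀ a₁ β β' : ℝ) (h₀ : 2 < a₀) (hβ₀ : a₀ ≤ β) (hβ₁ : β ≤ a₁) (hβ' : a₀ ≤ β')
    (hd : |β' - β| ≤ 1) :
    |Ebeta β' - Ebeta β| ≤ 2 * (|β' - β| + 4 * a₁ * |β' - β| +
      1 / log (a₀/2) * (|β' - β| * (1 + |log (|β' - β|)|))) := by
  have hb : 2 < β := by linarith
  have hb' : 2 < β' := by linarith
  have hl : 0 < log (a₀/2) := log_pos (by linarith)
  set δ := |β' - β| with hδ
  have hδ0 : 0 ≤ δ := abs_nonneg _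
  set B := 1 / log (a₀/2) with hB
  have hBpos : 0 < B := by positivity
  set ε := δ + 4 * a₁ * δ + B * (δ * (1 + |log δ|)) with hε
  set t := orb β' 1 with ht
  have htm : ∀ n, t n ∈ Set.Icc (0:ℝ) 1 := orb_mem _ _ (by norm_num)
  have hts : ∀ n, t (n+1) = Int.fract (β' * t n) := orb_succ' _ _
  have hden := denom β' hb'
  have hE := E_mem β hb
  have hns := num_sub β' (Ebeta β) hb'
  have hPb : ∀ n, |Psi β (t n)| ≤ 2 := fun n => Psi_bd β _ hb (htm n)
  set e : ℕ → ℝ := fun n => Psi β (t (n+1)) / β' - Psi β (Int.fract (β * t n)) / β with he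
  have hebd : ∀ n, |e n| ≤ ε := by
    intro n
    have e1 : e n = Psi β (t (n+1)) * ((β - β') / (β * β')) +
        (Psi β (Int.fract (β' * t n)) - Psi β (Int.fract (β * t n))) / β := by
      simp only [he, ← hts]; field_simp; ring
    obtain ⟨c0, c1⟩ := htm n
    have hdd : |β' * t n - β * t n| = δ * t n := by
      rw [← sub_mul, abs_mul, abs_of_nonneg c0]
    have m := modulus a₀ a₁ β (Ebeta β) h₀ hβ₀ hβ₁ hE.1 hE.2 (Psi β)
      (fun t ht => Psi_fe β t hb ht) (Psi_zero β hb) (Psi_one β hb)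
      (fun t ht => Psi_bd β t hb ht) (β * t n) (β' * t n) (by rw [hdd]; nlinarith)
    rw [hdd, ← hB, negMulLog_mul] at m
    have n1 : t n * negMulLog δ ≤ δ * |log δ| := by
      rw [negMulLog]
      have a1 : -log δ ≤ |log δ| := neg_le_abs _
      have a2 := mul_le_mul_of_nonneg_left a1 hδ0
      have a3 : t n * (δ * |log δ|) ≤ δ * |log δ| :=
        mul_le_of_le_one_left (by positivity) c1
      nlinarith
    have n2 : negMulLog (t n) ≤ 1 := by
      have := negMulLog_le_one_sub_self c0
      linarith
    have m1 : 4 * a₁ * (δ * t n) + B * (t n * negMulLog δ + δ * negMulLog (t n)) ≤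
        4 * a₁ * δ + B * (δ * (1 + |log δ|)) := by
      have a1 : 4 * a₁ * (δ * t n) ≤ 4 * a₁ * δ := by
        have : δ * t n ≤ δ := by nlinarith
        have : 0 ≤ 4 * a₁ := by linarith
        gcongr
      have a2 : t n * negMulLog δ + δ * negMulLog (t n) ≤ δ * (1 + |log δ|) := by nlinarith
      have := mul_le_mul_of_nonneg_left a2 hBpos.le
      linarith
    have p1 : |Psi β (t (n+1)) * ((β - β') / (β * β'))| ≤ δ := by
      rw [abs_mul, abs_div, abs_sub_comm β, ← hδ, abs_of_pos (by positivity : 0 < β * β')]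
      have : δ / (β * β') ≤ δ / 2 := by
        gcongr; nlinarith
      calc _ ≤ 2 * (δ / 2) := by gcongr; exact hPb _
        _ = δ := by ring
    have p2 : |(Psi β (Int.fract (β' * t n)) - Psi β (Int.fract (β * t n))) / β| ≤
        4 * a₁ * δ + B * (δ * (1 + |log δ|)) := by
      rw [abs_div, abs_of_pos (by linarith : 0 < β)]
      exact (div_le_self (abs_nonneg _) (by linarith)).trans (m.trans m1)
    rw [e1]
    refine (abs_add_le _ _).trans ?_
    linarith
  obtain ⟨se, be⟩ := bd β' ε hb' e hebd
  have sa := (bd β' 2 hb' (fun n => Psi β (t n)) hPb).1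
  have sa' := (summable_nat_add_iff 1).2 sa
  have tel := sa.tsum_eq_zero_add
  have key : ∑' n : ℕ, (t n ^ 2 / 2 - Ebeta β * t n) / β' ^ n = ∑' n, e n / β'^n := by
    have : (fun n : ℕ => (t n ^ 2 / 2 - Ebeta β * t n) / β' ^ n) = fun n =>
        (Psi β (t n) / β'^n - Psi β (t (n+1)) / β'^(n+1)) + e n / β'^n := by
      ext n
      have f := Psi_fe β (t n) hb (htm n)
      have f' : t n ^ 2 / 2 - Ebeta β * t n = Psi β (t n) - Psi β (Int.fract (β * t n)) / β := by
        linarith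
      rw [f']
      simp only [he, pow_succ]
      field_simp
      ring
    rw [this, (sa.sub sa').tsum_add se, sa.tsum_sub sa', tel]
    have : t 0 = 1 := by simp [ht, orb]
    rw [this, Psi_one β hb]; simp
  rw [key] at hns
  rw [hns, abs_mul, abs_of_pos (by linarith : 0 < ∑' n : ℕ, betaOrbit β' n / β' ^ n)] at be
  nlinarith [abs_nonneg (Ebeta β' - Ebeta β)]

end BetaLog

/-- Log-Lipschitz continuity of `β ↦ E(β)` on compact subintervals of `(2,∞)`. -/
theorem stmt4 (a₀ a₁ : ℝ) (h₀ : 2 < a₀) (h₁ : a₀ ≤ a₁) :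
    ∃ K > (0:ℝ), ∀ β ∈ Set.Icc a₀ a₁, ∀ β' ∈ Set.Icc a₀ a₁, β ≠ β' →
      |Ebeta β - Ebeta β'| ≤ K * |β - β'| * (1 + |Real.log (|β - β'|)|) := by
  have hl : 0 < Real.log (a₀/2) := Real.log_pos (by linarith)
  have hBpos : 0 < 1 / Real.log (a₀/2) := by positivity
  refine ⟨2 * (1 + 4 * a₁ + 1 / Real.log (a₀/2)), by linarith, ?_⟩
  intro β hβ β' hβ' _
  set B := 1 / Real.log (a₀/2)
  set δ := |β - β'|
  have hδ : 0 ≤ δ := abs_nonneg _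
  have hL : 0 ≤ |Real.log δ| := abs_nonneg _
  by_cases hd : δ ≤ 1
  · have := BetaLog.final a₀ a₁ β' β h₀ hβ'.1 hβ'.2 hβ.1 hd
    refine this.trans ?_
    have h : 0 ≤ (1 + 4 * a₁) * (δ * |Real.log δ|) :=
      mul_nonneg (by linarith) (by positivity)
    change 2 * (δ + 4 * a₁ * δ + B * (δ * (1 + |Real.log δ|))) ≤ _
    linarith
  · push Not at hd
    have e1 := BetaLog.E_mem β (by linarith [hβ.1])
    have e2 := BetaLog.E_mem β' (by linarith [hβ'.1])
    have : |Ebeta β - Ebeta β'| ≤ 1 := by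
      rw [abs_le]; constructor <;> linarith [e1.1, e1.2, e2.1, e2.2]
    refine this.trans ?_
    have k1 : 1 ≤ 2 * (1 + 4 * a₁ + B) := by linarith
    have k2 : 1 ≤ 2 * (1 + 4 * a₁ + B) * δ := by nlinarith
    nlinarith
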